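/- arXiv:2502.20328 — 2 statements merged into one kernel-verified Lean document; each statement's English description precedes it below -/
import Mathlib

section
/- For all β > 0 and q > 0, the function C_β (defined by C_β(s) := 1/(2s²) − (π²/(2β²))/sinh²(π s/β) for s ≠ 0 and extended continuously by C_β(0) := π²/(6β²)) is integrable on (0,∞) and ∫₀^∞ cos(q s)·C_β(s) ds = (π/2)·q/(e^{β q} − 1). -/
open MeasureTheory Real Set

/-- The function `C_β`, the smooth part of the thermal two-point function along a static
worldlinearises: `C_β(s) = 1/(2s²) − (π²/(2β²))/sinh²(π s/β)` for `s ≠ 0`, extended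
continuously by `C_β(0) := π²/(6β²)`. -/
noncomputable def Cfun (β s : ℝ) : ℝ :=
  if s = 0 then π ^ 2 / (6 * β ^ 2)
  else 1 / (2 * s ^ 2) - (π ^ 2 / (2 * β ^ 2)) / Real.sinh (π * s / β) ^ 2

/-!
By the Mittag-Leffler expansion of `1 / sin²`, for `s > 0` one has
`C_β(s) = ∑_{n ≥ 1} Re (1 / (nβ + is)²)`, and `Re (1 / (a + is)²)` is the cosine transform of
`q e^{-aq}`. Summing the geometric series, `C_β` is the cosine transform of the Planck factor
`q / (e^{βq} - 1)`. The cosine integral of `C_β` cannot be taken term by term, since the `L¹` norms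
of the summands decay only like `1 / n`; instead the claim is Fourier inversion for the even
extension of the Planck factor. Inversion needs `C_β` integrable, which holds because a cosine
transform of an integrable function is bounded, while `sinh² x ≥ x²` gives `0 ≤ C_β(s) ≤ 1 / (2s²)`.
-/

open Filter
open scoped FourierTransform Topology

section IntegralsOverTheLine

variable {E : Type*} [NormedAddCommGroup E]

lemma integrable_comp_abs {f : ℝ → E} (hf : IntegrableOn f (Ioi 0)) :
    Integrable fun x ↦ f |x| := by
  have hpos : IntegrableOn (fun x ↦ f |x|) (Ioi 0) :=
    hf.congr_fun (fun x hx ↦ by rw [abs_of_pos (mem_Ioi.1 hx)]) measurableSet_Ioi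
  have hneg : IntegrableOn (fun x ↦ f |x|) (Iic 0) := by
    rw [integrableOn_Iic_iff_integrableOn_Iio]
    have := IntegrableOn.comp_neg_Iio (c := (0 : ℝ)) (f := fun x ↦ f |x|) (by rwa [neg_zero])
    simpa only [abs_neg] using this
  rw [← integrableOn_univ, ← Iic_union_Ioi (a := 0)]
  exact hneg.union hpos

variable [NormedSpace ℝ E]

lemma integral_eq_integral_Ioi_add_comp_neg {f : ℝ → E} (hf : Integrable f) :
    ∫ x, f x = ∫ x in Ioi 0, (f x + f (-x)) := by
  rw [integral_add hf.integrableOn hf.comp_neg.integrableOn, integral_comp_neg_Ioi, neg_zero,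
    add_comm, intervalIntegral.integral_Iic_add_Ioi hf.integrableOn hf.integrableOn]

end IntegralsOverTheLine

section CosineTransform

/-- The unnormalized cosine transform `w ↦ ∫₀^∞ cos(w x) f(x) dx` of a function on the half-line;
values of `f` outside `(0, ∞)` are ignored. -/
noncomputable def cosTransform (f : ℝ → ℝ) (w : ℝ) : ℝ :=
  ∫ x in Ioi 0, cos (w * x) * f x

lemma cosTransform_neg (f : ℝ → ℝ) (w : ℝ) : cosTransform f (-w) = cosTransform f w := by
  simp only [cosTransform, neg_mul, cos_neg]

lemma cosTransform_abs (f : ℝ → ℝ) (w : ℝ) : cosTransform f |w| = cosTransform f w := by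
  rcases abs_choice w with h | h <;> simp only [h, cosTransform_neg]

lemma cosTransform_congr {f g : ℝ → ℝ} (h : EqOn f g (Ioi 0)) :
    cosTransform f = cosTransform g := by
  funext w
  exact setIntegral_congr_fun measurableSet_Ioi fun x hx ↦ by simp only [h hx]

lemma cosTransform_const_mul_comp_mul_left (f : ℝ → ℝ) (a w : ℝ) {c : ℝ} (hc : 0 < c) :
    cosTransform (fun x ↦ a * f (c * x)) w = a * c⁻¹ * cosTransform f (w / c) := by
  have hscale := integral_comp_mul_left_Ioi (fun y ↦ cos (w / c * y) * f y) 0 hc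
  rw [mul_zero, smul_eq_mul] at hscale
  rw [cosTransform, cosTransform, mul_assoc, ← hscale, ← integral_const_mul]
  refine integral_congr_ae (.of_forall fun x ↦ ?_)
  simp only [← mul_assoc (w / c), div_mul_cancel₀ w hc.ne', mul_left_comm a]

lemma norm_cos_mul_le (w y : ℝ) : ‖cos w * y‖ ≤ ‖y‖ := by
  rw [norm_mul]
  exact mul_le_of_le_one_left (norm_nonneg y) (abs_cos_le_one w)

lemma integrableOn_cos_mul {f : ℝ → ℝ} {s : Set ℝ} (hf : IntegrableOn f s) (w : ℝ) :
    IntegrableOn (fun x ↦ cos (w * x) * f x) s :=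
  Integrable.mono hf (.mul (by fun_prop) hf.aestronglyMeasurable)
    (.of_forall fun x ↦ norm_cos_mul_le (w * x) (f x))

lemma norm_cosTransform_le {f : ℝ → ℝ} (hf : IntegrableOn f (Ioi 0)) (w : ℝ) :
    ‖cosTransform f w‖ ≤ ∫ x in Ioi 0, ‖f x‖ :=
  norm_integral_le_of_norm_le hf.norm (.of_forall fun x ↦ norm_cos_mul_le (w * x) (f x))

lemma hasSum_cosTransform {ι : Type*} [Countable ι] {F : ι → ℝ → ℝ} {f : ℝ → ℝ}
    (hF : ∀ i, IntegrableOn (F i) (Ioi 0)) (hsum : Summable fun i ↦ ∫ x in Ioi 0, ‖F i x‖)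
    (hf : ∀ x ∈ Ioi 0, HasSum (fun i ↦ F i x) (f x)) (w : ℝ) :
    HasSum (fun i ↦ cosTransform (F i) w) (cosTransform f w) := by
  have hcosF := fun i ↦ integrableOn_cos_mul (hF i) w
  have hcosSum : Summable fun i ↦ ∫ x in Ioi 0, ‖cos (w * x) * F i x‖ :=
    hsum.of_nonneg_of_le (fun i ↦ integral_nonneg fun x ↦ norm_nonneg _) fun i ↦
      integral_mono (hcosF i).norm (hF i).norm fun x ↦ norm_cos_mul_le (w * x) (F i x)
  have htsum : ∫ x in Ioi 0, ∑' i, cos (w * x) * F i x = cosTransform f w :=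
    setIntegral_congr_fun measurableSet_Ioi fun x hx ↦ ((hf x hx).mul_left _).tsum_eq
  exact htsum ▸ hasSum_integral_of_summable_integral_norm hcosF hcosSum

lemma fourier_ofReal_comp_abs {f : ℝ → ℝ} (hf : IntegrableOn f (Ioi 0)) (w : ℝ) :
    𝓕 (fun x ↦ (f |x| : ℂ)) w = ↑(2 * cosTransform f (2 * π * w)) := by
  have hint : Integrable fun x : ℝ ↦ Complex.exp (↑(-2 * π * x * w) * Complex.I) • (f |x| : ℂ) :=
    (integrable_comp_abs hf).ofReal.bdd_mul (c := 1) (by fun_prop)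
      (.of_forall fun x ↦ (Complex.norm_exp_ofReal_mul_I _).le)
  rw [Real.fourier_real_eq_integral_exp_smul, integral_eq_integral_Ioi_add_comp_neg hint,
    cosTransform, ← integral_const_mul, ← integral_complex_ofReal]
  refine setIntegral_congr_fun measurableSet_Ioi fun x hx ↦ ?_
  simp only [abs_neg, abs_of_pos (mem_Ioi.1 hx), smul_eq_mul, ← add_mul]
  push_cast
  rw [← mul_assoc 2, Complex.two_cos]
  ring_nf

theorem cosTransform_cosTransform {f : ℝ → ℝ} {x : ℝ} (hf : IntegrableOn f (Ioi 0))
    (hfc : IntegrableOn (cosTransform f) (Ioi 0)) (hx : 0 < x) (hcont : ContinuousAt f x) :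
    cosTransform (cosTransform f) x = π / 2 * f x := by
  set g : ℝ → ℝ := fun w ↦ 2 * cosTransform f (2 * π * w) with hg
  have hgi : IntegrableOn g (Ioi 0) :=
    Integrable.const_mul
      ((integrableOn_Ioi_comp_mul_left_iff (cosTransform f) 0 two_pi_pos).2 (by rwa [mul_zero])) 2
  have hfourier : 𝓕 (fun y ↦ (f |y| : ℂ)) = fun w ↦ (g |w| : ℂ) := by
    funext w
    rw [fourier_ofReal_comp_abs hf, hg, ← cosTransform_abs, abs_mul, abs_of_pos two_pi_pos]
  have hcont' : ContinuousAt (fun y ↦ (f |y| : ℂ)) x :=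
    Complex.continuous_ofReal.continuousAt.comp
      (ContinuousAt.comp (by rwa [abs_of_pos hx]) continuous_abs.continuousAt)
  have hinv := (integrable_comp_abs hf).ofReal.fourierInv_fourier_eq
    (hfourier ▸ (integrable_comp_abs hgi).ofReal) hcont'
  rw [hfourier, Real.fourierInv_eq_fourier_neg, fourier_ofReal_comp_abs hgi, abs_of_pos hx,
    Complex.ofReal_inj, hg, cosTransform_const_mul_comp_mul_left _ _ _ two_pi_pos,
    mul_div_cancel_left₀ _ two_pi_pos.ne', cosTransform_neg] at hinv
  rw [← hinv]
  field_simp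

end CosineTransform

section ExponentialMoments

lemma integrableOn_mul_exp_neg_mul_Ioi {a : ℝ} (ha : 0 < a) :
    IntegrableOn (fun x ↦ x * exp (-(a * x))) (Ioi 0) := by
  simpa using integrableOn_rpow_mul_exp_neg_mul_rpow (s := 1) (p := 1) (by norm_num) one_pos ha

lemma integral_mul_exp_neg_mul_Ioi {a : ℝ} (ha : 0 < a) :
    ∫ x in Ioi 0, x * exp (-(a * x)) = 1 / a ^ 2 := by
  simpa [show (2 : ℝ) - 1 = 1 by norm_num] using
    integral_rpow_mul_exp_neg_mul_Ioi two_pos ha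

lemma norm_mul_cexp_neg_mul (c : ℂ) {x : ℝ} (hx : 0 ≤ x) :
    ‖(x : ℂ) * Complex.exp (-(c * x))‖ = x * exp (-(c.re * x)) := by
  simp [Complex.norm_exp, abs_of_nonneg hx]

variable {c : ℂ}

lemma integrableOn_mul_cexp_neg_mul_Ioi (hc : 0 < c.re) :
    IntegrableOn (fun x : ℝ ↦ (x : ℂ) * Complex.exp (-(c * x))) (Ioi 0) :=
  (integrableOn_mul_exp_neg_mul_Ioi hc).mono' (by fun_prop) <|
    (ae_restrict_mem measurableSet_Ioi).mono fun _ hx ↦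
      (norm_mul_cexp_neg_mul c (mem_Ioi.1 hx).le).le

lemma tendsto_cexp_neg_mul_atTop (hc : 0 < c.re) :
    Tendsto (fun x : ℝ ↦ Complex.exp (-(c * x))) atTop (𝓝 0) := by
  simpa [Complex.tendsto_exp_nhds_zero_iff] using tendsto_id.const_mul_atTop hc

lemma tendsto_mul_cexp_neg_mul_atTop (hc : 0 < c.re) :
    Tendsto (fun x : ℝ ↦ (x : ℂ) * Complex.exp (-(c * x))) atTop (𝓝 0) := by
  rw [tendsto_zero_iff_norm_tendsto_zero]
  refine (tendsto_rpow_mul_exp_neg_mul_atTop_nhds_zero 1 c.re hc).congr' ?_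
  filter_upwards [eventually_ge_atTop 0] with x hx
  rw [norm_mul_cexp_neg_mul c hx, rpow_one, neg_mul]

lemma integral_mul_cexp_neg_mul_Ioi (hc : 0 < c.re) :
    ∫ x : ℝ in Ioi 0, (x : ℂ) * Complex.exp (-(c * x)) = 1 / c ^ 2 := by
  have hc0 : c ≠ 0 := fun h ↦ by simp [h] at hc
  have hderiv (x : ℝ) : HasDerivAt
      (fun y : ℝ ↦ -(1 / c * (y * Complex.exp (-(c * y))) + 1 / c ^ 2 * Complex.exp (-(c * y))))
      (x * Complex.exp (-(c * x))) x := by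
    have hid : HasDerivAt (fun y : ℝ ↦ (y : ℂ)) 1 x := Complex.ofRealCLM.hasDerivAt
    have hexp := (hid.const_mul c).neg.cexp
    convert! (((hid.mul hexp).const_mul (1 / c)).add (hexp.const_mul (1 / c ^ 2))).neg using 1
    simp only [Pi.neg_apply]
    field_simp
    ring
  have hlim := (((tendsto_mul_cexp_neg_mul_atTop hc).const_mul (1 / c)).add
    ((tendsto_cexp_neg_mul_atTop hc).const_mul (1 / c ^ 2))).neg
  rw [integral_Ioi_of_hasDerivAt_of_tendsto' (fun x _ ↦ hderiv x)
    (integrableOn_mul_cexp_neg_mul_Ioi hc) hlim]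
  simp

lemma cosTransform_mul_exp_neg_mul {a : ℝ} (ha : 0 < a) (w : ℝ) :
    cosTransform (fun x ↦ x * exp (-(a * x))) w = (1 / ((a : ℂ) + w * Complex.I) ^ 2).re := by
  have hre : 0 < ((a : ℂ) + w * Complex.I).re := by simpa using ha
  rw [← integral_mul_cexp_neg_mul_Ioi hre]
  refine Eq.trans ?_ (integral_re (integrableOn_mul_cexp_neg_mul_Ioi hre))
  refine integral_congr_ae (.of_forall fun x ↦ ?_)
  simp [Complex.exp_re, mul_comm, mul_left_comm]

end ExponentialMoments

section Planck

/-- The Planck factor `q / (e^{βq} - 1)` at inverse temperature `β`. At `q = 0` it takes the junk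
value `0` instead of the limit `1 / β`. -/
noncomputable def planck (β q : ℝ) : ℝ :=
  q / (exp (β * q) - 1)

variable {β q : ℝ}

lemma exp_sub_one_eq_two_mul_exp_half_mul_sinh_half (x : ℝ) :
    exp x - 1 = 2 * exp (x / 2) * sinh (x / 2) := by
  have hsq : exp x = exp (x / 2) * exp (x / 2) := by rw [← exp_add, add_halves]
  have hinv : exp (x / 2) * exp (-(x / 2)) = 1 := by rw [← exp_add, add_neg_cancel, exp_zero]
  rw [sinh_eq]
  linear_combination hsq + hinv

lemma mul_exp_half_le_exp_sub_one {x : ℝ} (hx : 0 ≤ x) : x * exp (x / 2) ≤ exp x - 1 := by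
  have hsinh : x / 2 ≤ sinh (x / 2) := self_le_sinh_iff.2 (by positivity)
  calc x * exp (x / 2) = 2 * exp (x / 2) * (x / 2) := by ring
    _ ≤ 2 * exp (x / 2) * sinh (x / 2) := by gcongr
    _ = exp x - 1 := (exp_sub_one_eq_two_mul_exp_half_mul_sinh_half x).symm

lemma exp_mul_sub_one_pos (hβ : 0 < β) (hq : 0 < q) : 0 < exp (β * q) - 1 :=
  sub_pos.2 (one_lt_exp_iff.2 (mul_pos hβ hq))

lemma hasSum_planck (hβ : 0 < β) (hq : 0 < q) :
    HasSum (fun n : ℕ ↦ q * exp (-((n + 1) * β * q))) (planck β q) := by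
  have hlt : exp (-(β * q)) < 1 := Real.exp_lt_one_iff.2 (neg_lt_zero.2 (mul_pos hβ hq))
  have hgeom := (hasSum_geometric_of_lt_one (exp_pos _).le hlt).mul_left (q * exp (-(β * q)))
  have hterm (n : ℕ) : q * exp (-((n + 1) * β * q))
      = q * exp (-(β * q)) * exp (-(β * q)) ^ n := by
    rw [mul_assoc q, ← exp_nat_mul, ← exp_add]
    ring_nf
  have hlim : planck β q = q * exp (-(β * q)) * (1 - exp (-(β * q)))⁻¹ := by
    have := exp_mul_sub_one_pos hβ hq
    rw [planck, exp_neg]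
    field_simp
  simpa only [hterm, hlim] using hgeom

lemma norm_planck_le (hβ : 0 < β) (hq : 0 < q) :
    ‖planck β q‖ ≤ β⁻¹ * exp (-(β / 2) * q) := by
  have hpos := exp_mul_sub_one_pos hβ hq
  rw [planck, norm_of_nonneg (by positivity)]
  calc q / (exp (β * q) - 1) ≤ q / (β * q * exp (β * q / 2)) := by
        gcongr
        exact mul_exp_half_le_exp_sub_one (by positivity)
    _ = β⁻¹ * exp (-(β / 2) * q) := by
        rw [neg_mul, div_mul_eq_mul_div, exp_neg]
        field_simp

lemma integrableOn_planck (hβ : 0 < β) : IntegrableOn (planck β) (Ioi 0) := by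
  have hmeas : Measurable (planck β) := by unfold planck; fun_prop
  exact ((integrableOn_exp_mul_Ioi (by linarith : -(β / 2) < 0) 0).const_mul β⁻¹).mono'
    hmeas.aestronglyMeasurable <|
    (ae_restrict_mem measurableSet_Ioi).mono fun q hq ↦ norm_planck_le hβ hq

lemma continuousAt_planck (hβ : 0 < β) (hq : 0 < q) : ContinuousAt (planck β) q := by
  unfold planck
  exact ContinuousAt.div (by fun_prop) (by fun_prop) (exp_mul_sub_one_pos hβ hq).ne'

lemma hasSum_cosTransform_planck (hβ : 0 < β) (s : ℝ) :
    HasSum (fun n : ℕ ↦ (1 / (((n + 1) * β : ℝ) + s * Complex.I) ^ 2).re)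
      (cosTransform (planck β) s) := by
  have hpos (n : ℕ) : 0 < (n + 1) * β := by positivity
  have hnorm (n : ℕ) : ∫ x in Ioi 0, ‖x * exp (-((n + 1) * β * x))‖
      = 1 / β ^ 2 * (1 / ((n + 1 : ℕ) : ℝ) ^ 2) := by
    rw [setIntegral_congr_fun measurableSet_Ioi fun x hx ↦
      norm_of_nonneg (mul_nonneg (mem_Ioi.1 hx).le (exp_pos _).le),
      integral_mul_exp_neg_mul_Ioi (hpos n)]
    push_cast
    field_simp
  have hsum : Summable fun n : ℕ ↦ ∫ x in Ioi 0, ‖x * exp (-((n + 1) * β * x))‖ := by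
    simp only [hnorm]
    exact ((summable_nat_add_iff 1).2 (summable_one_div_nat_pow.2 one_lt_two)).mul_left _
  simpa only [cosTransform_mul_exp_neg_mul (hpos _)] using
    hasSum_cosTransform (fun n ↦ integrableOn_mul_exp_neg_mul_Ioi (hpos n)) hsum
      (fun x hx ↦ hasSum_planck hβ hx) s

end Planck

section MittagLeffler

lemma sin_pi_mul_sq_mul_exp (z : ℂ) :
    Complex.sin (π * z) ^ 2 * (4 * Complex.exp (2 * π * Complex.I * z))
      = -(1 - Complex.exp (2 * π * Complex.I * z)) ^ 2 := by
  have hsq : Complex.exp (2 * π * Complex.I * z) = Complex.exp (π * z * Complex.I) ^ 2 := by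
    rw [← Complex.exp_nat_mul]
    push_cast
    ring_nf
  have hinv : Complex.exp (-(π * z) * Complex.I) * Complex.exp (π * z * Complex.I) = 1 := by
    rw [← Complex.exp_add, neg_mul, neg_add_cancel, Complex.exp_zero]
  have hsin : 2 * Complex.sin (π * z) * Complex.exp (π * z * Complex.I)
      = (1 - Complex.exp (2 * π * Complex.I * z)) * Complex.I := by
    rw [Complex.two_sin, hsq]
    linear_combination Complex.I * hinv
  calc _ = (2 * Complex.sin (π * z) * Complex.exp (π * z * Complex.I)) ^ 2 := by rw [hsq]; ring
    _ = _ := by rw [hsin, mul_pow, Complex.I_sq, mul_neg_one]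

lemma hasSum_one_div_add_int_sq {z : ℂ} (hz : 0 < z.im) :
    HasSum (fun n : ℤ ↦ 1 / (z + n) ^ 2) (π ^ 2 / Complex.sin (π * z) ^ 2) := by
  set r := Complex.exp (2 * π * Complex.I * z) with hr
  have hr1 : ‖r‖ < 1 := UpperHalfPlane.norm_exp_two_pi_I_lt_one ⟨z, hz⟩
  have hr1' : 1 - r ≠ 0 := sub_ne_zero.2 fun h ↦ by simp [← h] at hr1
  have hsin := sin_pi_mul_sq_mul_exp z
  rw [← hr] at hsin
  have hsum : Summable fun n : ℤ ↦ 1 / (z + n) ^ 2 :=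
    (EisensteinSeries.linear_right_summable z 1 (k := 2) le_rfl).congr fun n ↦ by simp
  have hq := EisensteinSeries.qExpansion_identity (k := 1) le_rfl ⟨z, hz⟩
  simp only [Nat.reduceAdd, pow_one, ← hr,
    tsum_coe_mul_geometric_of_norm_lt_one hr1, Nat.factorial_one, Nat.cast_one, div_one] at hq
  convert hsum.hasSum using 1
  have hsin0 : Complex.sin (π * z) ^ 2 ≠ 0 := fun h ↦ by simp [h, hr1'] at hsin
  rw [hq, mul_pow, mul_pow, Complex.I_sq, mul_div_assoc', div_eq_div_iff hsin0 (pow_ne_zero 2 hr1')]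
  linear_combination (π : ℂ) ^ 2 * hsin

lemma one_div_add_sq_add_one_div_sub_sq (m y : ℝ) :
    1 / (y * Complex.I + m) ^ 2 + 1 / (y * Complex.I - m) ^ 2
      = ((2 * (1 / ((m : ℂ) + y * Complex.I) ^ 2).re : ℝ) : ℂ) := by
  rw [← Complex.add_conj]
  simp only [map_div₀, map_pow, map_add, map_mul, map_one, Complex.conj_I, Complex.conj_ofReal]
  congr 2 <;> ring

lemma hasSum_re_one_div_add_mul_I_sq {y : ℝ} (hy : 0 < y) :
    HasSum (fun n : ℕ ↦ (1 / (((n + 1 : ℝ) : ℂ) + y * Complex.I) ^ 2).re)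
      (1 / (2 * y ^ 2) - π ^ 2 / (2 * sinh (π * y) ^ 2)) := by
  have hsin : Complex.sin (π * (y * Complex.I)) = sinh (π * y) * Complex.I := by
    rw [← mul_assoc, Complex.sin_mul_I]
    push_cast
    rfl
  have hfold := (hasSum_nat_add_iff' 1).2
    (hasSum_one_div_add_int_sq (z := y * Complex.I) (by simpa using hy)).nat_add_neg
  have hterm (n : ℕ) : 1 / (y * Complex.I + ((n + 1 : ℕ) : ℤ)) ^ 2
      + 1 / (y * Complex.I + (-((n + 1 : ℕ) : ℤ) : ℤ)) ^ 2
      = ((2 * (1 / (((n + 1 : ℝ) : ℂ) + y * Complex.I) ^ 2).re : ℝ) : ℂ) := by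
    rw [← one_div_add_sq_add_one_div_sub_sq]
    push_cast
    ring
  have hlim : π ^ 2 / Complex.sin (π * (y * Complex.I)) ^ 2 + 1 / (y * Complex.I + (0 : ℤ)) ^ 2
      - ∑ i ∈ Finset.range 1, (1 / (y * Complex.I + (i : ℤ)) ^ 2
        + 1 / (y * Complex.I + (-(i : ℤ) : ℤ)) ^ 2)
      = ((2 * (1 / (2 * y ^ 2) - π ^ 2 / (2 * sinh (π * y) ^ 2)) : ℝ) : ℂ) := by
    have hI : Complex.I⁻¹ ^ 2 = -1 := by rw [Complex.inv_I, neg_sq, Complex.I_sq]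
    rw [hsin, Finset.sum_range_one, mul_pow, Complex.I_sq]
    push_cast
    linear_combination -(y : ℂ)⁻¹ ^ 2 * hI
  simp only [hterm, hlim] at hfold
  exact (hasSum_mul_left_iff two_ne_zero).1 (Complex.hasSum_ofReal.1 hfold)

end MittagLeffler

section ThermalFunction

variable {β s : ℝ}

lemma Cfun_of_ne_zero (β : ℝ) {s : ℝ} (hs : s ≠ 0) :
    Cfun β s = 1 / (2 * s ^ 2) - (π ^ 2 / (2 * β ^ 2)) / sinh (π * s / β) ^ 2 :=
  if_neg hs

lemma hasSum_Cfun (hβ : 0 < β) (hs : 0 < s) :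
    HasSum (fun n : ℕ ↦ (1 / (((n + 1) * β : ℝ) + s * Complex.I) ^ 2).re) (Cfun β s) := by
  have hβ' : (β : ℂ) ≠ 0 := mod_cast hβ.ne'
  have hterm (n : ℕ) : (1 / (((n + 1) * β : ℝ) + s * Complex.I) ^ 2).re
      = 1 / β ^ 2 * (1 / (((n + 1 : ℝ) : ℂ) + (s / β : ℝ) * Complex.I) ^ 2).re := by
    rw [← Complex.re_ofReal_mul]
    congr 1
    push_cast
    rw [one_div_mul_one_div, ← mul_pow]
    congr 2
    field_simp
  have hlim : Cfun β s
      = 1 / β ^ 2 * (1 / (2 * (s / β) ^ 2) - π ^ 2 / (2 * sinh (π * (s / β)) ^ 2)) := by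
    rw [Cfun_of_ne_zero β hs.ne', mul_div_assoc]
    field_simp
  simp only [hterm, hlim]
  exact (hasSum_re_one_div_add_mul_I_sq (div_pos hs hβ)).mul_left (1 / β ^ 2)

lemma cosTransform_planck (hβ : 0 < β) : EqOn (cosTransform (planck β)) (Cfun β) (Ioi 0) :=
  fun s hs ↦ (hasSum_cosTransform_planck hβ s).unique (hasSum_Cfun hβ hs)

lemma sq_le_sinh_sq (x : ℝ) : x ^ 2 ≤ sinh x ^ 2 :=
  sq_le_sq.2 (abs_sinh x ▸ self_le_sinh_iff.2 (abs_nonneg x))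

lemma Cfun_nonneg (hβ : β ≠ 0) (s : ℝ) : 0 ≤ Cfun β s := by
  rcases eq_or_ne s 0 with rfl | hs
  · rw [Cfun, if_pos rfl]
    positivity
  · have hx : 0 < (π * s / β) ^ 2 := by positivity
    rw [Cfun_of_ne_zero β hs, sub_nonneg]
    calc π ^ 2 / (2 * β ^ 2) / sinh (π * s / β) ^ 2
        ≤ π ^ 2 / (2 * β ^ 2) / (π * s / β) ^ 2 :=
          div_le_div_of_nonneg_left (by positivity) hx (sq_le_sinh_sq _)
      _ = 1 / (2 * s ^ 2) := by field_simp

lemma sq_mul_Cfun_le (β s : ℝ) : s ^ 2 * Cfun β s ≤ 1 / 2 := by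
  rcases eq_or_ne s 0 with rfl | hs
  · norm_num
  · have hsinh : 0 ≤ π ^ 2 / (2 * β ^ 2) / sinh (π * s / β) ^ 2 := by positivity
    calc s ^ 2 * Cfun β s ≤ s ^ 2 * (1 / (2 * s ^ 2)) := by
          rw [Cfun_of_ne_zero β hs]
          gcongr
          exact sub_le_self _ hsinh
      _ = 1 / 2 := by field_simp

lemma measurable_Cfun (β : ℝ) : Measurable (Cfun β) := by
  unfold Cfun
  exact Measurable.ite (measurableSet_singleton 0) (by fun_prop) (by fun_prop)

lemma integrableOn_Cfun (hβ : 0 < β) : IntegrableOn (Cfun β) (Ioi 0) := by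
  set M := ∫ q in Ioi 0, ‖planck β q‖
  refine (integrable_inv_one_add_sq.const_mul (M + 1 / 2)).integrableOn.mono'
    (measurable_Cfun β).aestronglyMeasurable ?_
  filter_upwards [ae_restrict_mem measurableSet_Ioi] with s hs
  have hbdd : ‖Cfun β s‖ ≤ M :=
    cosTransform_planck hβ hs ▸ norm_cosTransform_le (integrableOn_planck hβ) s
  rw [← div_eq_mul_inv, le_div_iff₀ (by positivity)]
  rw [norm_of_nonneg (Cfun_nonneg hβ.ne' s)] at hbdd ⊢
  linarith [sq_mul_Cfun_le β s]

end ThermalFunction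

/-- For `β > 0` and `q > 0`, `C_β` is integrable on `(0,∞)` and
`∫₀^∞ cos(q s)·C_β(s) ds = (π/2)·q/(e^{β q} − 1)`. -/
theorem stmt1 (β q : ℝ) (hβ : 0 < β) (hq : 0 < q) :
    IntegrableOn (Cfun β) (Set.Ioi 0) ∧
    ∫ s in Set.Ioi (0 : ℝ), Real.cos (q * s) * Cfun β s
      = (π / 2) * (q / (Real.exp (β * q) - 1)) := by
  have hC := integrableOn_Cfun hβ
  have hplanck : IntegrableOn (cosTransform (planck β)) (Ioi 0) :=
    hC.congr_fun (cosTransform_planck hβ).symm measurableSet_Ioi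
  refine ⟨hC, ?_⟩
  calc cosTransform (Cfun β) q
      = cosTransform (cosTransform (planck β)) q := by
        rw [cosTransform_congr (cosTransform_planck hβ)]
    _ = π / 2 * planck β q :=
        cosTransform_cosTransform (integrableOn_planck hβ) hplanck hq (continuousAt_planck hβ hq)
end

section
/- Let β_L, β_R > 0, v ∈ (−1,1) with v ≠ 0, γ := 1/√(1 − v²), d₊ := γ(1 + v), d₋ := γ(1 − v), and define w̃_{N,v}(s) := (1/(4πγv))·[(1/β_R)·(f_{β_R/γ}(s) − f_{β_R d₋}(s)) − (1/β_L)·(f_{β_L/γ}(s) − f_{β_L d₊}(s))]. Then for every E ∈ ℝ with E ≠ 0: ∫_ℝ e^{−i E s}·w̃_{N,v}(s) ds − (E/(2π))·Θ(−E) = R(β_L, −v, E) + R(β_R, v, E), where R(β, u, E) := (√(1 − u²)/(4π u β))·ln((1 − e^{−β√(1 − u²)·E})/(1 − e^{−β√((1 − u)/(1 + u))·E})). -/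
open MeasureTheory Real

/-- The function `f_c(s) := −(c/π)·Σ_{n=1}^∞ 1/(n²c² + s²)`. -/
noncomputable def fFun (c s : ℝ) : ℝ :=
  -(c / π) * ∑' n : ℕ, 1 / (((n : ℝ) + 1) ^ 2 * c ^ 2 + s ^ 2)

/-- The function `R(β, u, E)` appearing in the NESS transition rate. -/
noncomputable def Rfun (β u E : ℝ) : ℝ :=
  (Real.sqrt (1 - u ^ 2) / (4 * π * u * β)) *
    Real.log ((1 - Real.exp (-(β * Real.sqrt (1 - u ^ 2) * E))) /
      (1 - Real.exp (-(β * Real.sqrt ((1 - u) / (1 + u)) * E))))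

/-!
On its Fourier side `f_c` is elementary: expanding `log (1 - e^{-c|x|}) = -∑ e^{-nc|x|} / n` and
transforming each two-sided exponential into a Lorentzian shows that `2π f_c` is the Fourier
transform of `x ↦ log (1 - e^{-c|x|})`. Since `f_c(s) ≈ -1/(2|s|)` is not integrable, this cannot be
inverted directly; but that tail does not depend on `c`, so the inversion formula applies to a
difference `f_c - f_d`. Each reservoir contributes one such difference, and replacing `|E|`
by `E` inside the logarithms produces, for `E < 0`, the multiples of `E` that add up to the vacuum
term.
-/

open Filter FourierTransform Asymptotics

section TermwiseIntegration

variable {ι α F : Type*} [Countable ι] [MeasurableSpace α] {μ : Measure α} [NormedAddCommGroup F]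
  {u : ι → α → F} {f : α → F}

lemma integrable_of_hasSum_of_summable_integral_norm (hu : ∀ i, Integrable (u i) μ)
    (hsum : Summable fun i ↦ ∫ x, ‖u i x‖ ∂μ) (hf : ∀ᵐ x ∂μ, HasSum (u · x) (f x)) :
    Integrable f μ := by
  have hmeas : AEStronglyMeasurable f μ :=
    aestronglyMeasurable_of_tendsto_ae atTop
      (fun s ↦ (integrable_finsetSum' s fun i _ ↦ hu i).aestronglyMeasurable)
      (by simpa only [HasSum, SummationFilter.unconditional_filter, Finset.sum_apply] using hf)
  have hnorm (i : ι) : ∫⁻ x, ‖u i x‖ₑ ∂μ = ENNReal.ofReal (∫ x, ‖u i x‖ ∂μ) :=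
    (ofReal_integral_norm_eq_lintegral_enorm (hu i)).symm
  refine ⟨hmeas, ?_⟩
  calc ∫⁻ x, ‖f x‖ₑ ∂μ
      ≤ ∫⁻ x, ∑' i, ‖u i x‖ₑ ∂μ := by
        refine lintegral_mono_ae (hf.mono fun x hx ↦ ?_)
        rw [← hx.tsum_eq]
        exact enorm_tsum_le_tsum_enorm
    _ = ∑' i, ENNReal.ofReal (∫ x, ‖u i x‖ ∂μ) := by
        simp_rw [lintegral_tsum fun i ↦ (hu i).aestronglyMeasurable.enorm, hnorm]
    _ < ⊤ := hsum.tsum_ofReal_lt_top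

end TermwiseIntegration

/-- The Fourier transform `∫ e^{-iωx} f(x) dx` in terms of the angular frequency `ω`, the convention
used for transition rates; Mathlib's `𝓕` has `e^{-2πiωx}` in place of `e^{-iωx}`. -/
noncomputable def angularFourier (f : ℝ → ℂ) (ω : ℝ) : ℂ :=
  ∫ x : ℝ, Complex.exp (-(Complex.I * ω * x)) * f x

section AngularFourier

variable {f g : ℝ → ℂ}

lemma norm_exp_neg_I_mul_mul (ω x : ℝ) : ‖Complex.exp (-(Complex.I * ω * x))‖ = 1 := by
  simp [Complex.norm_exp]

lemma integrable_exp_neg_I_mul_mul (hf : Integrable f) (ω : ℝ) :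
    Integrable fun x : ℝ ↦ Complex.exp (-(Complex.I * ω * x)) * f x :=
  hf.bdd_mul (c := 1) (by fun_prop) (.of_forall fun x ↦ (norm_exp_neg_I_mul_mul ω x).le)

lemma angularFourier_eq_fourier (f : ℝ → ℂ) (ω : ℝ) :
    angularFourier f ω = 𝓕 f (ω / (2 * π)) := by
  rw [angularFourier, Real.fourier_real_eq_integral_exp_smul]
  congr! 3 with x
  push_cast
  field_simp

lemma angularFourier_const_mul (a : ℂ) (f : ℝ → ℂ) (ω : ℝ) :
    angularFourier (fun x ↦ a * f x) ω = a * angularFourier f ω := by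
  simp_rw [angularFourier, mul_left_comm _ a, integral_const_mul]

lemma angularFourier_add (hf : Integrable f) (hg : Integrable g) (ω : ℝ) :
    angularFourier (fun x ↦ f x + g x) ω = angularFourier f ω + angularFourier g ω := by
  simp_rw [angularFourier, mul_add]
  exact integral_add (integrable_exp_neg_I_mul_mul hf ω) (integrable_exp_neg_I_mul_mul hg ω)

lemma angularFourier_sub (hf : Integrable f) (hg : Integrable g) (ω : ℝ) :
    angularFourier (fun x ↦ f x - g x) ω = angularFourier f ω - angularFourier g ω := by
  simp_rw [angularFourier, mul_sub]
  exact integral_sub (integrable_exp_neg_I_mul_mul hf ω) (integrable_exp_neg_I_mul_mul hg ω)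

lemma hasSum_angularFourier {ι : Type*} [Countable ι] {u : ι → ℝ → ℂ}
    (hu : ∀ i, Integrable (u i)) (hsum : Summable fun i ↦ ∫ x, ‖u i x‖)
    (hf : ∀ᵐ x, HasSum (u · x) (f x)) (ω : ℝ) :
    HasSum (fun i ↦ angularFourier (u i) ω) (angularFourier f ω) := by
  have h := hasSum_integral_of_summable_integral_norm
    (fun i ↦ integrable_exp_neg_I_mul_mul (hu i) ω)
    (by simpa only [norm_mul, norm_exp_neg_I_mul_mul, one_mul] using hsum)
  have hlim : angularFourier f ω = ∫ x : ℝ, ∑' i, Complex.exp (-(Complex.I * ω * x)) * u i x :=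
    integral_congr_ae (hf.mono fun x hx ↦ (hx.mul_left _).tsum_eq.symm)
  rw [hlim]
  exact h

theorem angularFourier_angularFourier (hf : Integrable f)
    (hf' : Integrable (angularFourier f)) {ω : ℝ} (hω : ContinuousAt f (-ω)) :
    angularFourier (angularFourier f) ω = 2 * π * f (-ω) := by
  have hfourier : 𝓕 f = fun w ↦ angularFourier f (2 * π * w) := by
    funext w
    rw [angularFourier_eq_fourier, mul_div_cancel_left₀ w two_pi_pos.ne']
  have hfourier_int : Integrable (𝓕 f) := hfourier ▸ hf'.comp_mul_left' two_pi_pos.ne'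
  calc angularFourier (angularFourier f) ω
      = 2 * π * ∫ w : ℝ, Complex.exp (-(Complex.I * ω * (2 * π * w : ℝ))) *
          angularFourier f (2 * π * w) := by
        rw [Measure.integral_comp_mul_left
          (fun s : ℝ ↦ Complex.exp (-(Complex.I * ω * s)) * angularFourier f s), angularFourier,
          abs_inv, abs_of_pos two_pi_pos, Complex.real_smul]
        push_cast
        field_simp
    _ = 2 * π * 𝓕⁻ (𝓕 f) (-ω) := by
        rw [Real.fourierInv_eq', hfourier]
        congr! 5 with w
        simp only [RCLike.inner_apply, ringHom_apply, mul_neg, Complex.ofReal_neg,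
          Complex.ofReal_mul, Complex.ofReal_ofNat, neg_mul, neg_inj]
        ring
    _ = 2 * π * f (-ω) := by rw [hf.fourierInv_fourier_eq hfourier_int hω]

end AngularFourier

section TwoSidedExponential

variable {a : ℝ}

lemma integrable_exp_neg_mul_abs (ha : 0 < a) : Integrable fun x : ℝ ↦ exp (-(a * |x|)) := by
  rw [← integrableOn_univ, ← Set.Iic_union_Ioi (a := (0 : ℝ)), integrableOn_union]
  constructor
  · refine (integrableOn_exp_mul_Iic ha 0).congr_fun (fun x hx ↦ ?_) measurableSet_Iic
    simp [abs_of_nonpos (Set.mem_Iic.1 hx)]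
  · refine (integrableOn_exp_mul_Ioi (neg_neg_of_pos ha) 0).congr_fun (fun x hx ↦ ?_)
      measurableSet_Ioi
    simp [abs_of_pos (Set.mem_Ioi.1 hx)]

lemma integral_exp_neg_mul_abs (ha : 0 < a) : ∫ x : ℝ, exp (-(a * |x|)) = 2 / a := by
  rw [integral_comp_abs (f := fun x ↦ exp (-(a * x)))]
  simp_rw [← neg_mul]
  rw [integral_exp_mul_Ioi (neg_neg_of_pos ha), mul_zero, exp_zero, neg_div_neg_eq, mul_one_div]

lemma angularFourier_exp_neg_mul_abs (ha : 0 < a) (ω : ℝ) :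
    angularFourier (fun x ↦ (exp (-(a * |x|)) : ℝ)) ω = (2 * a / (a ^ 2 + ω ^ 2) : ℝ) := by
  have hint : Integrable fun x : ℝ ↦ Complex.exp (-(Complex.I * ω * x)) * (exp (-(a * |x|)) : ℝ) :=
    integrable_exp_neg_I_mul_mul (integrable_exp_neg_mul_abs ha).ofReal ω
  have hneg : ∀ x ∈ Set.Iic (0 : ℝ), Complex.exp (-(Complex.I * ω * x)) *
      (exp (-(a * |x|)) : ℝ) = Complex.exp ((a - Complex.I * ω) * x) := fun x hx ↦ by
    rw [abs_of_nonpos hx, Complex.ofReal_exp, ← Complex.exp_add]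
    push_cast
    ring_nf
  have hpos : ∀ x ∈ Set.Ioi (0 : ℝ), Complex.exp (-(Complex.I * ω * x)) *
      (exp (-(a * |x|)) : ℝ) = Complex.exp ((-a - Complex.I * ω) * x) := fun x hx ↦ by
    rw [abs_of_pos hx, Complex.ofReal_exp, ← Complex.exp_add]
    push_cast
    ring_nf
  have hsub : (a - Complex.I * ω : ℂ) ≠ 0 := fun h ↦ ha.ne' (by simpa using congrArg Complex.re h)
  have hadd : (a + Complex.I * ω : ℂ) ≠ 0 := fun h ↦ ha.ne' (by simpa using congrArg Complex.re h)
  have hprod : (a ^ 2 + ω ^ 2 : ℂ) = (a - Complex.I * ω) * (a + Complex.I * ω) := by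
    linear_combination (ω ^ 2 : ℂ) * Complex.I_sq
  calc angularFourier (fun x ↦ (exp (-(a * |x|)) : ℝ)) ω
      = (∫ x in Set.Iic (0 : ℝ), Complex.exp ((a - Complex.I * ω) * x)) +
          ∫ x in Set.Ioi (0 : ℝ), Complex.exp ((-a - Complex.I * ω) * x) := by
        rw [angularFourier,
          ← intervalIntegral.integral_Iic_add_Ioi hint.integrableOn hint.integrableOn,
          setIntegral_congr_fun measurableSet_Iic hneg,
          setIntegral_congr_fun measurableSet_Ioi hpos]
    _ = 1 / (a - Complex.I * ω) + 1 / (a + Complex.I * ω) := by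
        rw [integral_exp_mul_complex_Iic (by simpa using ha),
          integral_exp_mul_complex_Ioi (by simpa using ha), ← neg_add', Complex.ofReal_zero,
          mul_zero, mul_zero, Complex.exp_zero, neg_div_neg_eq]
    _ = (2 * a / (a ^ 2 + ω ^ 2) : ℝ) := by
        push_cast
        rw [hprod]
        field_simp
        ring

end TwoSidedExponential

section LorentzSeries

variable {c s : ℝ}

lemma summable_one_div_sq_mul_sq (c : ℝ) :
    Summable fun n : ℕ ↦ 1 / (((n : ℝ) + 1) ^ 2 * c ^ 2) := by
  have hsq := (summable_nat_add_iff 1).2 (summable_one_div_nat_pow.2 one_lt_two)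
  simpa [mul_comm] using hsq.mul_left (c ^ 2)⁻¹

lemma continuous_fFun (hc : c ≠ 0) : Continuous (fFun c) := by
  refine continuous_const.mul (continuous_tsum (fun n ↦ ?_)
    (summable_one_div_sq_mul_sq c) fun n s ↦ ?_)
  · exact continuous_const.div (by fun_prop) fun s ↦ by positivity
  · rw [norm_of_nonneg (by positivity)]
    exact one_div_le_one_div_of_le (by positivity) (le_add_of_nonneg_right (sq_nonneg s))

lemma fFun_abs (c s : ℝ) : fFun c |s| = fFun c s := by
  simp only [fFun, sq_abs]

lemma cot_ofReal_mul_I (y : ℝ) :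
    Complex.cot (y * Complex.I) = -Complex.I * (cosh y / sinh y : ℝ) := by
  rw [Complex.cot, Complex.cos_mul_I, Complex.sin_mul_I, ← div_div, Complex.div_I]
  push_cast
  ring

lemma pi_mul_cosh_div_sinh_sub_one_div {x : ℝ} (hx : x ≠ 0) :
    π * (cosh (π * x) / sinh (π * x)) - 1 / x =
      ∑' n : ℕ, 2 * x / (((n : ℝ) + 1) ^ 2 + x ^ 2) := by
  have hxI : (x * Complex.I : ℂ) ∈ Complex.integerComplement := by
    rintro ⟨n, hn⟩
    exact hx (by simpa using (congrArg Complex.im hn).symm)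
  have hterm (n : ℕ) : 1 / (x * Complex.I - (n + 1)) + 1 / (x * Complex.I + (n + 1)) =
      -Complex.I * (2 * x / (((n : ℝ) + 1) ^ 2 + x ^ 2) : ℝ) := by
    have hsub : (x * Complex.I - (n + 1) : ℂ) ≠ 0 :=
      fun h ↦ hx (by simpa using congrArg Complex.im h)
    have hadd : (x * Complex.I + (n + 1) : ℂ) ≠ 0 :=
      fun h ↦ hx (by simpa using congrArg Complex.im h)
    have hprod : ((n + 1) ^ 2 + x ^ 2 : ℂ) =
        -((x * Complex.I - (n + 1)) * (x * Complex.I + (n + 1))) := by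
      linear_combination (x ^ 2 : ℂ) * Complex.I_sq
    push_cast
    rw [hprod]
    field_simp
    ring
  have h := cot_series_rep' hxI
  simp_rw [hterm, tsum_mul_left, ← Complex.ofReal_tsum] at h
  rw [← mul_assoc, ← Complex.ofReal_mul, cot_ofReal_mul_I, ← div_div, Complex.div_I] at h
  rw [← Complex.ofReal_inj]
  apply mul_left_cancel₀ (neg_ne_zero.2 Complex.I_ne_zero)
  rw [← h]
  push_cast
  ring

lemma fFun_eq_cosh_div_sinh (hc : c ≠ 0) (hs : s ≠ 0) :
    fFun c s = c / (2 * π * s ^ 2) - cosh (π * s / c) / sinh (π * s / c) / (2 * s) := by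
  have hterm (n : ℕ) : 1 / (((n : ℝ) + 1) ^ 2 * c ^ 2 + s ^ 2) =
      1 / (2 * s * c) * (2 * (s / c) / (((n : ℝ) + 1) ^ 2 + (s / c) ^ 2)) := by
    field_simp
  rw [fFun, tsum_congr hterm, tsum_mul_left,
    ← pi_mul_cosh_div_sinh_sub_one_div (div_ne_zero hs hc), mul_div_assoc]
  field_simp
  ring

lemma fFun_add_one_div_mem_Icc (hc : 0 < c) (hs : 0 < s) :
    fFun c s + 1 / (2 * s) ∈ Set.Icc 0 (c / (2 * π * s ^ 2)) := by
  set y := π * s / c with hy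
  have hy0 : 0 < y := by positivity
  have : 0 < sinh y := sinh_pos_iff.2 hy0
  have hvalue : fFun c s + 1 / (2 * s) = c / (2 * π * s ^ 2) - exp (-y) / sinh y / (2 * s) := by
    rw [fFun_eq_cosh_div_sinh hc.ne' hs.ne', ← hy, ← cosh_sub_sinh]
    field_simp
    ring
  have hdecay : exp (-y) / sinh y / (2 * s) ≤ 1 / y / (2 * s) := by
    gcongr
    · exact exp_le_one_iff.2 (neg_nonpos.2 hy0.le)
    · exact self_le_sinh_iff.2 hy0.le
  have hscale : 1 / y / (2 * s) = c / (2 * π * s ^ 2) := by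
    rw [hy]
    field_simp
  rw [hvalue, Set.mem_Icc]
  exact ⟨by linarith, sub_le_self _ (by positivity)⟩

lemma fFun_add_one_div_isBigO (hc : 0 < c) :
    (fun s ↦ fFun c s + 1 / (2 * |s|)) =O[cocompact ℝ] fun s ↦ (1 + s ^ 2)⁻¹ := by
  refine .of_bound (c / π) ?_
  filter_upwards [tendsto_norm_cocompact_atTop.eventually_ge_atTop 1] with s hs
  rw [norm_eq_abs] at hs
  obtain ⟨hlower, hupper⟩ := fFun_add_one_div_mem_Icc hc (zero_lt_one.trans_le hs)
  rw [fFun_abs] at hlower hupper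
  rw [norm_of_nonneg hlower, norm_of_nonneg (by positivity)]
  refine hupper.trans ?_
  rw [← div_eq_mul_inv, div_div, mul_comm 2, mul_assoc]
  gcongr
  nlinarith [sq_abs s]

lemma integrable_fFun_sub_fFun {d : ℝ} (hc : 0 < c) (hd : 0 < d) :
    Integrable fun s ↦ fFun c s - fFun d s := by
  have hcont := (continuous_fFun hc.ne').sub (continuous_fFun hd.ne')
  have htail := (fFun_add_one_div_isBigO hc).sub (fFun_add_one_div_isBigO hd)
  simp only [add_sub_add_right_eq_sub] at htail
  exact hcont.locallyIntegrable.integrable_of_isBigO_cocompact htail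
    (integrable_inv_one_add_sq.integrableAtFilter _)

end LorentzSeries

/-- The even function `log (1 - e^{-c|x|})`: minus the logarithm of the partition function of a
bosonic mode of energy `|x|` at inverse temperature `c`. Its Fourier transform is `2π f_c`. At
`x = 0` it takes the junk value `log 0 = 0`. -/
noncomputable def boseLog (c x : ℝ) : ℝ :=
  log (1 - exp (-(c * |x|)))

/-- The terms of the expansion `log (1 - e^{-c|x|}) = -∑_{n ≥ 1} e^{-nc|x|} / n`, indexed from
`n = 0`. -/
noncomputable def boseLogTerm (c : ℝ) (n : ℕ) (x : ℝ) : ℝ :=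
  -1 / (n + 1) * exp (-((n + 1) * c * |x|))

section BoseLog

variable {c d x E : ℝ}

lemma exp_neg_mul_abs_lt_one (hc : 0 < c) (hx : x ≠ 0) : exp (-(c * |x|)) < 1 :=
  exp_lt_one_iff.2 (neg_neg_of_pos (mul_pos hc (abs_pos.2 hx)))

lemma boseLog_neg (c x : ℝ) : boseLog c (-x) = boseLog c x := by
  rw [boseLog, boseLog, abs_neg]

lemma continuousAt_boseLog (hc : 0 < c) (hx : x ≠ 0) : ContinuousAt (boseLog c) x :=
  ContinuousAt.log (by fun_prop) (sub_pos.2 (exp_neg_mul_abs_lt_one hc hx)).ne'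

lemma hasSum_boseLogTerm (hc : 0 < c) (hx : x ≠ 0) :
    HasSum (boseLogTerm c · x) (boseLog c x) := by
  have h := (hasSum_pow_div_log_of_abs_lt_one
    ((abs_of_pos (exp_pos _)).trans_lt (exp_neg_mul_abs_lt_one hc hx))).neg
  rw [neg_neg] at h
  refine h.congr_fun fun n ↦ ?_
  rw [boseLogTerm, ← exp_nat_mul]
  push_cast
  ring_nf

lemma ae_hasSum_boseLogTerm (hc : 0 < c) : ∀ᵐ x, HasSum (boseLogTerm c · x) (boseLog c x) :=
  (Measure.ae_ne volume 0).mono fun _ ↦ hasSum_boseLogTerm hc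

lemma integrable_boseLogTerm (hc : 0 < c) (n : ℕ) : Integrable (boseLogTerm c n) :=
  (integrable_exp_neg_mul_abs (by positivity)).const_mul _

lemma summable_integral_norm_boseLogTerm (hc : 0 < c) :
    Summable fun n ↦ ∫ x, ‖boseLogTerm c n x‖ := by
  refine ((summable_one_div_sq_mul_sq c).mul_left (2 * c)).congr fun n ↦ ?_
  have hnorm (x : ℝ) : ‖boseLogTerm c n x‖ = 1 / (n + 1) * exp (-((n + 1) * c * |x|)) := by
    rw [boseLogTerm, norm_mul, neg_div, norm_neg, norm_of_nonneg (by positivity),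
      norm_of_nonneg (exp_pos _).le]
  simp_rw [hnorm, integral_const_mul]
  rw [integral_exp_neg_mul_abs (by positivity)]
  field_simp

lemma integrable_boseLog (hc : 0 < c) : Integrable (boseLog c) :=
  integrable_of_hasSum_of_summable_integral_norm (integrable_boseLogTerm hc)
    (summable_integral_norm_boseLogTerm hc) (ae_hasSum_boseLogTerm hc)

lemma angularFourier_boseLogTerm (hc : 0 < c) (n : ℕ) (s : ℝ) :
    angularFourier (fun x ↦ boseLogTerm c n x) s =
      (-2 * c * (1 / ((n + 1) ^ 2 * c ^ 2 + s ^ 2)) : ℝ) := by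
  simp only [boseLogTerm, Complex.ofReal_mul (-1 / ((n : ℝ) + 1))]
  rw [angularFourier_const_mul, angularFourier_exp_neg_mul_abs (by positivity),
    ← Complex.ofReal_mul]
  congr 1
  field_simp

theorem angularFourier_boseLog (hc : 0 < c) (s : ℝ) :
    angularFourier (fun x ↦ boseLog c x) s = (2 * π * fFun c s : ℝ) := by
  have hint (n : ℕ) : Integrable fun x ↦ (boseLogTerm c n x : ℂ) :=
    (integrable_boseLogTerm hc n).ofReal
  have h := hasSum_angularFourier hint
    (by simpa only [Complex.norm_real] using summable_integral_norm_boseLogTerm hc)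
    ((ae_hasSum_boseLogTerm hc).mono fun x ↦ Complex.hasSum_ofReal.2) s
  simp only [angularFourier_boseLogTerm hc] at h
  rw [← h.tsum_eq, ← Complex.ofReal_tsum, tsum_mul_left, fFun]
  congr 1
  field_simp

theorem angularFourier_fFun_sub_fFun (hc : 0 < c) (hd : 0 < d) (hE : E ≠ 0) :
    angularFourier (fun s ↦ (fFun c s - fFun d s : ℝ)) E = (boseLog c E - boseLog d E : ℝ) := by
  have hint {a : ℝ} (ha : 0 < a) : Integrable fun x ↦ (boseLog a x : ℂ) :=
    (integrable_boseLog ha).ofReal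
  have htransform : angularFourier (fun x ↦ (boseLog c x : ℂ) - boseLog d x) =
      fun s ↦ (2 * π : ℂ) * (fFun c s - fFun d s : ℝ) := by
    funext s
    rw [angularFourier_sub (hint hc) (hint hd), angularFourier_boseLog hc,
      angularFourier_boseLog hd]
    push_cast
    ring
  have hcont : ContinuousAt (fun x ↦ (boseLog c x : ℂ) - boseLog d x) (-E) :=
    (continuousAt_boseLog hc (neg_ne_zero.2 hE)).ofReal.sub
      (continuousAt_boseLog hd (neg_ne_zero.2 hE)).ofReal
  have hinv := angularFourier_angularFourier (Integrable.sub' (hint hc) (hint hd))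
    (htransform ▸ (integrable_fFun_sub_fFun hc hd).ofReal.const_mul _) hcont
  rw [htransform, angularFourier_const_mul, boseLog_neg, boseLog_neg] at hinv
  have htwo_pi : (2 * π : ℂ) ≠ 0 := mul_ne_zero two_ne_zero (Complex.ofReal_ne_zero.2 pi_ne_zero)
  rw [mul_left_cancel₀ htwo_pi hinv, Complex.ofReal_sub]

-- `Real.log y` is `log |y|`, so for `E < 0` the factorisation
-- `1 - e^{-cE} = -e^{-cE} (1 - e^{-c|E|})` can be used under the logarithm.
lemma log_one_sub_exp_neg_mul (hc : 0 < c) (E : ℝ) :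
    log (1 - exp (-(c * E))) = boseLog c E - c * min E 0 := by
  rcases le_or_gt 0 E with hE | hE
  · rw [boseLog, abs_of_nonneg hE, min_eq_right hE, mul_zero, sub_zero]
  · have hfactor : 1 - exp (-(c * E)) = -(exp (-(c * E)) * (1 - exp (-(c * |E|)))) := by
      rw [mul_sub, ← exp_add, abs_of_neg hE]
      simp
    rw [hfactor, log_neg_eq_log, log_mul (exp_ne_zero _)
      (sub_pos.2 (exp_neg_mul_abs_lt_one hc hE.ne)).ne', log_exp, boseLog, min_eq_left hE.le]
    ring

lemma log_one_sub_exp_div (hc : 0 < c) (hd : 0 < d) (hE : E ≠ 0) :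
    log ((1 - exp (-(c * E))) / (1 - exp (-(d * E)))) =
      boseLog c E - boseLog d E - (c - d) * min E 0 := by
  have hne {a : ℝ} (ha : 0 < a) : 1 - exp (-(a * E)) ≠ 0 := by
    simp [sub_eq_zero, eq_comm (a := (1 : ℝ)), ha.ne', hE]
  rw [log_div (hne hc) (hne hd), log_one_sub_exp_neg_mul hc, log_one_sub_exp_neg_mul hd]
  ring

end BoseLog

/-- The contribution to `w̃_{N,v}` of a reservoir at inverse temperature `β`, with respect to which
the detector has the signed velocity `u`: `u = v` for the right reservoir, `u = -v` for the left
one. The arguments of `f` are `β/γ` and `β d_∓`, expressed in terms of `u`. -/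
noncomputable def reservoirCorrelation (β u s : ℝ) : ℝ :=
  √(1 - u ^ 2) / (4 * π * u * β) * (fFun (β * √(1 - u ^ 2)) s - fFun (β * √((1 - u) / (1 + u))) s)

section Reservoir

variable {β u E : ℝ}

lemma one_sub_sq_pos (hu₁ : -1 < u) (hu₂ : u < 1) : 0 < 1 - u ^ 2 := by nlinarith

lemma sqrt_one_sub_div_one_add (hu : u < 1) : √((1 - u) / (1 + u)) = (1 - u) / √(1 - u ^ 2) := by
  have hpos : 0 < 1 - u := sub_pos.2 hu
  rw [← mul_div_mul_left (1 - u) (1 + u) hpos.ne', ← sq, sqrt_div (sq_nonneg _),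
    sqrt_sq hpos.le]
  ring_nf

lemma integrable_reservoirCorrelation (hβ : 0 < β) (hu₁ : -1 < u) (hu₂ : u < 1) :
    Integrable (reservoirCorrelation β u) := by
  have := one_sub_sq_pos hu₁ hu₂
  have : 0 < 1 - u := sub_pos.2 hu₂
  have : 0 < 1 + u := neg_lt_iff_pos_add'.1 hu₁
  exact (integrable_fFun_sub_fFun (by positivity) (by positivity)).const_mul _

theorem angularFourier_reservoirCorrelation (hβ : 0 < β) (hu₁ : -1 < u) (hu₂ : u < 1) (hu₀ : u ≠ 0)
    (hE : E ≠ 0) :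
    angularFourier (fun s ↦ reservoirCorrelation β u s) E =
      (Rfun β u E + (1 - u) / (4 * π) * min E 0 : ℝ) := by
  have hsq := one_sub_sq_pos hu₁ hu₂
  have : 0 < 1 - u := sub_pos.2 hu₂
  have : 0 < 1 + u := neg_lt_iff_pos_add'.1 hu₁
  have hγ : 0 < β * √(1 - u ^ 2) := by positivity
  have hd : 0 < β * √((1 - u) / (1 + u)) := by positivity
  have hcoeff : √(1 - u ^ 2) / (4 * π * u * β) * (β * √(1 - u ^ 2) - β * √((1 - u) / (1 + u))) =
      (1 - u) / (4 * π) := by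
    rw [sqrt_one_sub_div_one_add hu₂]
    field_simp
    rw [sq_sqrt hsq.le]
    ring
  simp only [reservoirCorrelation, Complex.ofReal_mul (√(1 - u ^ 2) / (4 * π * u * β))]
  rw [angularFourier_const_mul, angularFourier_fFun_sub_fFun hγ hd hE, ← Complex.ofReal_mul, Rfun,
    log_one_sub_exp_div hγ hd hE, ← hcoeff]
  congr 1
  ring

lemma twoPointFunction_eq_add_reservoirCorrelation {v γ : ℝ} (hv₁ : -1 < v) (hv₂ : v < 1)
    (hγ : γ = 1 / √(1 - v ^ 2)) (βL βR s : ℝ) :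
    1 / (4 * π * γ * v) *
        (1 / βR * (fFun (βR / γ) s - fFun (βR * (γ * (1 - v))) s) -
          1 / βL * (fFun (βL / γ) s - fFun (βL * (γ * (1 + v))) s)) =
      reservoirCorrelation βL (-v) s + reservoirCorrelation βR v s := by
  have hminus : γ * (1 - v) = √((1 - v) / (1 + v)) := by
    rw [sqrt_one_sub_div_one_add hv₂, hγ, one_div_mul_eq_div]
  have hplus : γ * (1 + v) = √((1 - -v) / (1 + -v)) := by
    rw [sqrt_one_sub_div_one_add (neg_lt.1 hv₁), hγ, one_div_mul_eq_div, neg_sq, sub_neg_eq_add]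
  have hdiv (β : ℝ) : β / γ = β * √(1 - v ^ 2) := by rw [hγ, div_div_eq_mul_div, div_one]
  have hcoeff : 1 / (4 * π * γ * v) = √(1 - v ^ 2) / (4 * π * v) := by
    rw [hγ]
    field_simp
  rw [reservoirCorrelation, reservoirCorrelation, hminus, hplus, hdiv, hdiv, hcoeff, neg_sq]
  ring

end Reservoir

/-- Transition rate of an Unruh–DeWitt detector moving with constant
velocity `v` through the NESS: with `γ = 1/√(1−v²)`, `d₊ = γ(1+v)`, `d₋ = γ(1−v)` and
`w̃_{N,v}(s) = (1/(4πγv))·[(1/β_R)(f_{β_R/γ}(s) − f_{β_R d₋}(s))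
  − (1/β_L)(f_{β_L/γ}(s) − f_{β_L d₊}(s))]`, for `E ≠ 0`,
`∫_ℝ e^{−iEs} w̃_{N,v}(s) ds − (E/(2π))·Θ(−E) = R(β_L, −v, E) + R(β_R, v, E)`. -/
theorem stmt11 (βL βR v E γ dp dm : ℝ) (hL : 0 < βL) (hR : 0 < βR)
    (hv1 : -1 < v) (hv2 : v < 1) (hv0 : v ≠ 0) (hE : E ≠ 0)
    (hγ : γ = 1 / Real.sqrt (1 - v ^ 2))
    (hdp : dp = γ * (1 + v)) (hdm : dm = γ * (1 - v)) :
    (∫ s : ℝ, Complex.exp (-(Complex.I * E * s)) *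
        (((1 / (4 * π * γ * v)) *
          ((1 / βR) * (fFun (βR / γ) s - fFun (βR * dm) s)
            - (1 / βL) * (fFun (βL / γ) s - fFun (βL * dp) s)) : ℝ) : ℂ))
      - (((E / (2 * π)) * (if E < 0 then 1 else 0) : ℝ) : ℂ)
      = ((Rfun βL (-v) E + Rfun βR v E : ℝ) : ℂ) := by
  have hw (s : ℝ) := twoPointFunction_eq_add_reservoirCorrelation hv1 hv2 hγ βL βR s
  simp only [← hdp, ← hdm] at hw
  have hL_int : Integrable fun s ↦ (reservoirCorrelation βL (-v) s : ℂ) :=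
    (integrable_reservoirCorrelation hL (neg_lt_neg hv2) (neg_lt.1 hv1)).ofReal
  have hR_int : Integrable fun s ↦ (reservoirCorrelation βR v s : ℂ) :=
    (integrable_reservoirCorrelation hR hv1 hv2).ofReal
  have hΘ : E / (2 * π) * (if E < 0 then 1 else 0) = min E 0 / (2 * π) := by
    split_ifs with h
    · rw [mul_one, min_eq_left h.le]
    · rw [mul_zero, min_eq_right (not_lt.1 h), zero_div]
  simp only [hw, hΘ, Complex.ofReal_add]
  rw [← angularFourier, angularFourier_add hL_int hR_int,
    angularFourier_reservoirCorrelation hL (neg_lt_neg hv2) (neg_lt.1 hv1) (neg_ne_zero.2 hv0) hE,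
    angularFourier_reservoirCorrelation hR hv1 hv2 hv0 hE]
  push_cast
  field_simp
  ring
end
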